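/- arXiv:1211.0510 — 2 statements merged into one kernel-verified Lean document; each statement's English description precedes it below -/
import Mathlib

section
/- Let μ ∈ ℝ, σ > 0 and κ > 0. Then the tail of the GEV distribution of Fréchet type decays as a power law: x^{1/κ} · (1 − F_G(x; μ, σ, κ)) tends to (σ/κ)^{1/κ} as x → +∞. -/
open Real Filter Topology

/-- The Generalized Extreme Value (GEV) cumulative distribution function with
location `μ`, scale `σ` and shape `κ`, extended by `0` below and by `1` above the
interval where `1 + κ (x - μ) / σ > 0`. -/
noncomputable def gevCDF (μ σ κ x : ℝ) : ℝ :=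
  if κ = 0 then Real.exp (-Real.exp (-(x - μ) / σ))
  else if 0 < 1 + κ * (x - μ) / σ then
    Real.exp (-(1 + κ * (x - μ) / σ) ^ (-1 / κ))
  else if κ < 0 then 1 else 0

/-!
The argument `t = (1 + κ (x - μ) / σ) ^ (-1/κ)` of the exponential tends to `0`, and
`1 - exp (-t) ~ t` there, so the tail is equivalent to `t`. Raising the equivalence
`1 + κ (x - μ) / σ ~ (κ / σ) x` to the power `-1/κ` gives `t ~ (σ / κ) ^ (1/κ) x ^ (-1/κ)`.
-/

open Asymptotics

theorem isEquivalent_rpow_of_eventually_nonneg {α : Type*} {l : Filter α} {u v : α → ℝ}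
    (huv : u ~[l] v) (hv : ∀ᶠ x in l, 0 ≤ v x) (r : ℝ) :
    (fun x ↦ u x ^ r) ~[l] fun x ↦ v x ^ r := by
  have abs_v : (fun x ↦ |v x|) =ᶠ[l] v := hv.mono fun _ ↦ abs_of_nonneg
  have abs_equiv : (fun x ↦ u x ^ r) ~[l] fun x ↦ |v x| ^ r :=
    (huv.congr_right abs_v.symm).rpow fun x ↦ abs_nonneg (v x)
  exact abs_equiv.congr_right (abs_v.fun_comp (· ^ r))

theorem isEquivalent_affine_rpow_atTop {b : ℝ} (hb : 0 < b) (a r : ℝ) :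
    (fun x ↦ (a + b * x) ^ r) ~[atTop] fun x ↦ b ^ r * x ^ r := by
  have linear_atTop : Tendsto (fun x : ℝ ↦ b * x) atTop atTop := tendsto_id.const_mul_atTop hb
  have affine_equiv : (fun x ↦ a + b * x) ~[atTop] fun x ↦ b * x :=
    IsEquivalent.refl.const_add_of_norm_tendsto_atTop (tendsto_norm_atTop_atTop.comp linear_atTop)
  refine (isEquivalent_rpow_of_eventually_nonneg affine_equiv
    (linear_atTop.eventually_ge_atTop 0) r).congr_right ?_
  filter_upwards [eventually_ge_atTop 0] with x hx
  exact mul_rpow hb.le hx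

theorem one_sub_exp_neg_isEquivalent_nhds_zero :
    (fun t : ℝ ↦ 1 - exp (-t)) ~[𝓝 0] fun t ↦ t := by
  have deriv_at_zero : HasDerivAt (fun t : ℝ ↦ 1 - exp (-t)) 1 0 := by
    simpa using (hasDerivAt_neg (0 : ℝ)).exp.const_sub 1
  refine IsLittleO.isEquivalent ?_
  simpa [hasDerivAt_iff_isLittleO_nhds_zero, Pi.sub_def] using deriv_at_zero

theorem gevCDF_of_pos {μ σ κ x : ℝ} (hκ : κ ≠ 0) (hx : 0 < 1 + κ * (x - μ) / σ) :
    gevCDF μ σ κ x = exp (-(1 + κ * (x - μ) / σ) ^ (-1 / κ)) := by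
  rw [gevCDF, if_neg hκ, if_pos hx]

theorem one_sub_gevCDF_isEquivalent_rpow (μ : ℝ) {σ κ : ℝ} (hσ : 0 < σ) (hκ : 0 < κ) :
    (fun x ↦ 1 - gevCDF μ σ κ x) ~[atTop] fun x ↦ (1 + κ * (x - μ) / σ) ^ (-1 / κ) := by
  have argument_atTop : Tendsto (fun x ↦ 1 + κ * (x - μ) / σ) atTop atTop :=
    tendsto_atTop_add_const_left _ 1
      (((tendsto_atTop_add_const_right _ (-μ) tendsto_id).const_mul_atTop hκ).atTop_div_const hσ)
  have rpow_argument_zero : Tendsto (fun x ↦ (1 + κ * (x - μ) / σ) ^ (-1 / κ)) atTop (𝓝 0) := by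
    rw [neg_div]
    exact (tendsto_rpow_neg_atTop (one_div_pos.mpr hκ)).comp argument_atTop
  refine (one_sub_exp_neg_isEquivalent_nhds_zero.comp_tendsto rpow_argument_zero).congr_left ?_
  filter_upwards [argument_atTop.eventually_gt_atTop 0] with x hx
  rw [gevCDF_of_pos hκ.ne' hx, Function.comp_apply]

theorem one_sub_gevCDF_isEquivalent_const_mul_rpow (μ : ℝ) {σ κ : ℝ} (hσ : 0 < σ) (hκ : 0 < κ) :
    (fun x ↦ 1 - gevCDF μ σ κ x) ~[atTop] fun x ↦ (σ / κ) ^ (1 / κ) * x ^ (-(1 / κ)) := by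
  have affine_argument (x : ℝ) : 1 + κ * (x - μ) / σ = (1 - κ * μ / σ) + κ / σ * x := by ring
  have constant : (κ / σ) ^ (-(1 / κ)) = (σ / κ) ^ (1 / κ) := by
    rw [rpow_neg_eq_inv_rpow, inv_div]
  have tail_equiv := one_sub_gevCDF_isEquivalent_rpow μ hσ hκ
  simp only [affine_argument, neg_div] at tail_equiv
  rw [← constant]
  exact tail_equiv.trans (isEquivalent_affine_rpow_atTop (div_pos hκ hσ) _ _)

theorem tendsto_rpow_mul_of_isEquivalent {f : ℝ → ℝ} {c p : ℝ}
    (hf : f ~[atTop] fun x ↦ c * x ^ (-p)) : Tendsto (fun x ↦ x ^ p * f x) atTop (𝓝 c) := by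
  have product_equiv : (fun x ↦ x ^ p * f x) ~[atTop] fun x ↦ x ^ p * (c * x ^ (-p)) :=
    IsEquivalent.refl.mul hf
  refine (product_equiv.congr_right ?_).tendsto_const
  filter_upwards [eventually_gt_atTop 0] with x hx
  rw [mul_left_comm, ← rpow_add hx, add_neg_cancel, rpow_zero, mul_one, Function.const_apply]

/-- For the Fréchet (type 2) case `κ > 0`, the tail of the GEV distribution decays
as a power law: `x ^ (1/κ) * (1 - F_G(x; μ, σ, κ)) → (σ/κ) ^ (1/κ)` as `x → +∞`. -/
theorem gev_frechet_power_law_tail (μ σ κ : ℝ) (hσ : 0 < σ) (hκ : 0 < κ) :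
    Tendsto (fun x : ℝ => x ^ (1 / κ) * (1 - gevCDF μ σ κ x)) atTop
      (𝓝 ((σ / κ) ^ (1 / κ))) := by
  exact tendsto_rpow_mul_of_isEquivalent (one_sub_gevCDF_isEquivalent_const_mul_rpow μ hσ hκ)
end

section
/- Let μ ∈ ℝ and σ > 0. The mean of the Gumbel distribution equals μ + σ·γ, where γ is the Euler–Mascheroni constant: ∫_ℝ x·g(x) dx = μ + σ·γ. In particular the mean differs from the mode μ. -/
open Real MeasureTheory

/-! If `X` is Gumbel distributed with location `μ` and scale `σ`, then `T = exp (-(X - μ) / σ)` is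
exponentially distributed with rate `1`. Hence `𝔼 X = μ - σ * 𝔼 (log T)`, and differentiating
`Γ s = ∫ t in Ioi 0, t ^ (s - 1) * exp (-t)` under the integral sign gives
`𝔼 (log T) = Γ' 1 = -γ`. -/

section GammaDerivative

open Set Filter Asymptotics Topology

theorem mellinConvergent_log_smul_exp_neg {s : ℂ} (hs : 0 < s.re) :
    MellinConvergent (fun t : ℝ ↦ log t • (exp (-t) : ℂ)) s := by
  have hcont : Continuous fun t : ℝ ↦ (exp (-t) : ℂ) := by fun_prop
  have hloc : LocallyIntegrableOn (fun t : ℝ ↦ (exp (-t) : ℂ)) (Ioi 0) :=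
    hcont.continuousOn.locallyIntegrableOn measurableSet_Ioi
  have htop : (fun t : ℝ ↦ (exp (-t) : ℂ)) =O[atTop] fun t ↦ t ^ (-(s.re + 1)) := by
    refine IsBigO.of_norm_left ?_
    simp only [Complex.norm_real, isBigO_norm_left]
    simpa only [neg_one_mul] using (isLittleO_exp_neg_mul_rpow_atTop one_pos _).isBigO
  have hzero : (fun t : ℝ ↦ (exp (-t) : ℂ)) =O[𝓝[>] 0] fun t ↦ t ^ (-0 : ℝ) := by
    simpa using hcont.continuousWithinAt.isBigO_one ℝ
  exact (mellin_hasDerivAt_of_isBigO_rpow hloc htop (lt_add_one _) hzero hs).1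

theorem ofReal_rpow_mul_log_mul_exp_neg {s t : ℝ} (ht : 0 ≤ t) :
    ((t ^ (s - 1) * (log t * exp (-t)) : ℝ) : ℂ) =
      (t : ℂ) ^ ((s : ℂ) - 1) * (log t * exp (-t)) := by
  push_cast [Complex.ofReal_cpow ht]
  rfl

theorem integrableOn_rpow_mul_log_mul_exp_neg_Ioi {s : ℝ} (hs : 0 < s) :
    IntegrableOn (fun t : ℝ ↦ t ^ (s - 1) * (log t * exp (-t))) (Ioi 0) := by
  have hconv := mellinConvergent_log_smul_exp_neg (s := s) (by simpa using hs)
  refine IntegrableOn.congr_fun hconv.re (fun t ht ↦ ?_) measurableSet_Ioi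
  simpa only [Complex.real_smul, smul_eq_mul, RCLike.re_eq_complex_re, Complex.ofReal_re] using
    congrArg Complex.re (ofReal_rpow_mul_log_mul_exp_neg (s := s) (le_of_lt ht)).symm

theorem hasDerivAt_realGamma_of_pos {s : ℝ} (hs : 0 < s) :
    HasDerivAt Gamma (∫ t in Ioi 0, t ^ (s - 1) * (log t * exp (-t))) s := by
  have hre : 0 < (s : ℂ).re := by simpa using hs
  have hGamma : Complex.Gamma =ᶠ[𝓝 (s : ℂ)] Complex.GammaIntegral := by
    filter_upwards [(isOpen_Ioi.preimage Complex.continuous_re).mem_nhds hre] with z hz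
    exact Complex.Gamma_eq_integral hz
  have hderiv :=
    ((Complex.hasDerivAt_GammaIntegral hre).congr_of_eventuallyEq hGamma).real_of_complex
  have hint : (∫ t : ℝ in Ioi 0, (t : ℂ) ^ ((s : ℂ) - 1) * (log t * exp (-t))) =
      (∫ t in Ioi 0, t ^ (s - 1) * (log t * exp (-t)) : ℝ) := by
    rw [← integral_complex_ofReal]
    exact setIntegral_congr_fun measurableSet_Ioi fun t ht ↦
      (ofReal_rpow_mul_log_mul_exp_neg (le_of_lt ht)).symm
  rwa [hint, Complex.ofReal_re] at hderiv

theorem integrableOn_log_mul_exp_neg_Ioi :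
    IntegrableOn (fun t : ℝ ↦ log t * exp (-t)) (Ioi 0) := by
  simpa using integrableOn_rpow_mul_log_mul_exp_neg_Ioi one_pos

theorem integral_log_mul_exp_neg_Ioi :
    ∫ t in Ioi (0 : ℝ), log t * exp (-t) = -eulerMascheroniConstant := by
  simpa using (hasDerivAt_realGamma_of_pos one_pos).unique hasDerivAt_Gamma_one

end GammaDerivative

section Gumbel

open Set

variable {E : Type*} [NormedAddCommGroup E] [NormedSpace ℝ E]

theorem integral_exp_smul_comp_exp (f : ℝ → E) :
    ∫ x, exp x • f (exp x) = ∫ t in Ioi 0, f t := by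
  have hsubst := integral_image_eq_integral_abs_deriv_smul MeasurableSet.univ
    (fun x _ ↦ (hasDerivAt_exp x).hasDerivWithinAt) exp_injective.injOn f
  simpa [range_exp] using hsubst.symm

/-- The density of the Gumbel distribution with location `μ` and scale `σ`, as a function
`ℝ → ℝ`. It is a probability density only for `0 < σ`. -/
noncomputable def gumbelPDFReal (μ σ x : ℝ) : ℝ :=
  (1 / σ) * exp (-(x - μ) / σ) * exp (-exp (-(x - μ) / σ))

theorem integral_gumbelPDFReal_smul (μ : ℝ) {σ : ℝ} (hσ : 0 < σ) (f : ℝ → E) :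
    ∫ x, gumbelPDFReal μ σ x • f x = ∫ t in Ioi 0, exp (-t) • f (μ - σ * log t) := by
  let φ : ℝ → E := fun u ↦ exp u • exp (-exp u) • f (μ - σ * u)
  have hpdf (x : ℝ) : gumbelPDFReal μ σ x • f x = σ⁻¹ • φ (-((x - μ) / σ)) := by
    have hx : μ - σ * -((x - μ) / σ) = x := by field_simp; ring
    simp only [φ, hx, gumbelPDFReal, smul_smul, neg_div, one_div, mul_assoc]
  calc ∫ x, gumbelPDFReal μ σ x • f x
      = σ⁻¹ • ∫ x, φ (-((x - μ) / σ)) := by simp only [hpdf, integral_smul]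
    _ = σ⁻¹ • ∫ x, φ (-(x / σ)) := by
        rw [integral_sub_right_eq_self (fun x ↦ φ (-(x / σ)))]
    _ = ∫ u, φ (-u) := by
        rw [Measure.integral_comp_div (fun u ↦ φ (-u)), abs_of_pos hσ, inv_smul_smul₀ hσ.ne']
    _ = ∫ u, φ u := integral_neg_eq_self φ volume
    _ = ∫ t in Ioi 0, exp (-t) • f (μ - σ * log t) := by
        simpa using integral_exp_smul_comp_exp fun t ↦ exp (-t) • f (μ - σ * log t)

end Gumbel

/-- The mean of the Gumbel distribution with location `μ` and scale `σ` equals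
`μ + σ γ`, where `γ` is the Euler–Mascheroni constant:
`∫ x, x · g(x) dx = μ + σ γ` for the Gumbel density
`g(x) = (1/σ) exp(-(x-μ)/σ) exp(-exp(-(x-μ)/σ))`.
In particular the mean differs from the mode `μ`. -/
theorem gumbel_mean (μ σ : ℝ) (hσ : 0 < σ) :
    (∫ x : ℝ, x * ((1 / σ) * Real.exp (-(x - μ) / σ) *
        Real.exp (-Real.exp (-(x - μ) / σ)))) =
      μ + σ * Real.eulerMascheroniConstant ∧
    μ + σ * Real.eulerMascheroniConstant ≠ μ := by
  have hγ : 0 < eulerMascheroniConstant := one_half_pos.trans one_half_lt_eulerMascheroniConstant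
  refine ⟨?_, (lt_add_of_pos_right μ (mul_pos hσ hγ)).ne'⟩
  calc ∫ x, x * gumbelPDFReal μ σ x
      = ∫ t in Set.Ioi 0, exp (-t) * (μ - σ * log t) := by
        simpa only [smul_eq_mul, mul_comm] using integral_gumbelPDFReal_smul μ hσ fun x ↦ x
    _ = ∫ t in Set.Ioi 0, (μ * exp (-t) - σ * (log t * exp (-t))) := by
        congr with t
        ring
    _ = μ * (∫ t in Set.Ioi 0, exp (-t)) - σ * ∫ t in Set.Ioi 0, log t * exp (-t) := by
        rw [integral_sub ((integrableOn_exp_neg_Ioi 0).const_mul μ)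
          (integrableOn_log_mul_exp_neg_Ioi.const_mul σ), integral_const_mul, integral_const_mul]
    _ = μ + σ * eulerMascheroniConstant := by
        rw [integral_exp_neg_Ioi_zero, integral_log_mul_exp_neg_Ioi]
        ring
end
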